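/- arXiv:2501.00766 — 3 statements merged into one kernel-verified Lean document; each statement's English description precedes it below -/
import Mathlib

section
/- Let Σ be a first-order signature, let ⟨A_i⟩_{i∈I} be a family of Σ-structures, let 𝓕 be a filter over I, and let ∏_𝓕 A_i denote the reduced product of ⟨A_i⟩_{i∈I} modulo 𝓕. Then for every basic Horn formula φ(x_1,…,x_n) and all elements ā_1,…,ā_n of the product ∏_{i∈I} A_i, if the set {i ∈ I : A_i ⊨ φ[π_i(ā_1),…,π_i(ā_n)]} belongs to 𝓕, then the reduced product ∏_𝓕 A_i satisfies φ at the equivalence classes ā_1/𝓕,…,ā_n/𝓕. -/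
/-!
Common definitions: products, reduced products, basic Horn formulas,
bundled structures, diagrams, units.
-/

namespace ZFHorn

open FirstOrder Language Structure Filter Set

universe u v w u' v' w'

variable {L : FirstOrder.Language.{v, w}}

/-- The direct product structure on a dependent function type. -/
instance piStructure {ι : Type*} (M : ι → Type*) [∀ i, L.Structure (M i)] :
    L.Structure (∀ i, M i) where
  funMap f x i := funMap f fun k => x k i
  RelMap r x := ∀ i, RelMap r fun k => x k i

/-- The reduced-product prestructure on `∀ i, M i` modulo a filter `F`:
functions act coordinatewise, and a relation holds precisely when it holds on a
set of coordinates belonging to `F`. -/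
instance reducedProductPrestructure {ι : Type*} (F : Filter ι) (M : ι → Type*)
    [∀ i, L.Structure (M i)] : L.Prestructure (F.productSetoid M) :=
  { toStructure :=
      { funMap := fun {_} f x i => funMap f fun k => x k i
        RelMap := fun {_} r x => ∀ᶠ i in F, RelMap r fun k => x k i }
    fun_equiv := fun {n} f x y xy => by
      refine mem_of_superset (iInter_mem.2 xy) fun i hi => ?_
      simp only [Set.mem_iInter, Set.mem_setOf_eq] at hi
      simp only [Set.mem_setOf_eq, hi]
    rel_equiv := fun {n} r x y xy => by
      rw [← iff_eq_eq]
      constructor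
      · intro hx
        refine mem_of_superset (inter_mem hx (iInter_mem.2 xy)) ?_
        rintro i ⟨h1, h2⟩
        simp only [Set.mem_iInter, Set.mem_setOf_eq] at *
        rw [← funext h2]
        exact h1
      · intro hy
        refine mem_of_superset (inter_mem hy (iInter_mem.2 xy)) ?_
        rintro i ⟨h1, h2⟩
        simp only [Set.mem_iInter, Set.mem_setOf_eq] at *
        rw [funext h2]
        exact h1 }

/-- The reduced product `∏_F M i` of a family of structures modulo a filter,
as a first-order structure. -/
instance reducedProductStructure {ι : Type*} (F : Filter ι) (M : ι → Type*)
    [∀ i, L.Structure (M i)] : L.Structure (F.Product M) :=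
  Language.quotientStructure

instance productNonempty {ι : Type*} (F : Filter ι) (M : ι → Type*)
    [∀ i, Nonempty (M i)] : Nonempty (F.Product M) :=
  ⟨(↑(fun i => Classical.arbitrary (M i)) : F.Product M)⟩

section Horn

variable {α : Type u'}

/-- `orList φ [ψ₁, …, ψₖ]` is the disjunction `φ ∨ ψ₁ ∨ ⋯ ∨ ψₖ`. -/
def orList : L.Formula α → List (L.Formula α) → L.Formula α
  | φ, [] => φ
  | φ, ψ :: l => φ ⊔ orList ψ l

/-- A list of formulas is a Horn list if each member is atomic or the negation of
an atomic formula, and at most one member is atomic. -/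
def IsHornList (l : List (L.Formula α)) : Prop :=
  (∀ χ ∈ l, BoundedFormula.IsAtomic χ ∨
      ∃ θ : L.Formula α, BoundedFormula.IsAtomic θ ∧ χ = θ.not) ∧
    ∀ i j : Fin l.length,
      BoundedFormula.IsAtomic (l.get i) → BoundedFormula.IsAtomic (l.get j) → i = j

/-- A basic Horn formula is a disjunction `φ₀ ∨ ⋯ ∨ φₙ` in which at most one
disjunct is atomic, the rest being negations of atomic formulas. -/
def IsBasicHorn (φ : L.Formula α) : Prop :=
  ∃ (ψ : L.Formula α) (l : List (L.Formula α)), φ = orList ψ l ∧ IsHornList (ψ :: l)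

/-- A strict basic Horn formula (quasi-identity) is a basic Horn formula in which
at least one disjunct is atomic. -/
def IsQuasiIdentity (φ : L.Formula α) : Prop :=
  ∃ (ψ : L.Formula α) (l : List (L.Formula α)), φ = orList ψ l ∧ IsHornList (ψ :: l) ∧
    ∃ χ ∈ ψ :: l, BoundedFormula.IsAtomic χ

end Horn

/-- `SatAll M φ` means that every assignment of the free variables satisfies `φ` in `M`. -/
def SatAll (M : Type u') [L.Structure M] {α : Type v'} (φ : L.Formula α) : Prop :=
  ∀ v : α → M, φ.Realize v

/-- A unit is a one-element structure in which every relation holds. -/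
def IsUnit (L : FirstOrder.Language.{v, w}) (M : Type u') [L.Structure M] : Prop :=
  (∃ a : M, ∀ b : M, b = a) ∧
    ∀ (n : ℕ) (r : L.Relations n) (x : Fin n → M), RelMap r x

/-- A bundled nonempty `L`-structure. -/
structure SStruct (L : FirstOrder.Language.{v, w}) : Type (max (u + 1) v w) where
  /-- the underlying type -/
  carrier : Type u
  /-- the structure on the underlying type -/
  struc : L.Structure carrier
  /-- the underlying type is nonempty -/
  nonempty : Nonempty carrier

attribute [instance] SStruct.struc SStruct.nonempty

instance : CoeSort (SStruct.{u} L) (Type u) :=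
  ⟨SStruct.carrier⟩

/-- Bundle a nonempty structure. -/
def SStruct.of (M : Type u) [i : L.Structure M] [h : Nonempty M] : SStruct.{u} L :=
  ⟨M, i, h⟩

variable (L)

/-- A class of structures is closed under isomorphisms. -/
def ClosedUnderIso (K : Set (SStruct.{u} L)) : Prop :=
  ∀ M ∈ K, ∀ N : SStruct.{u} L, Nonempty ((M : Type u) ≃[L] (N : Type u)) → N ∈ K

/-- A class of structures is closed under (nonempty) substructures. -/
def ClosedUnderSubstructures (K : Set (SStruct.{u} L)) : Prop :=
  ∀ M ∈ K, ∀ (S : L.Substructure (M : Type u)) (h : Nonempty S),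
    (⟨S, inferInstance, h⟩ : SStruct.{u} L) ∈ K

/-- A class of structures is closed under reduced products (modulo proper filters). -/
def ClosedUnderReducedProducts (K : Set (SStruct.{u} L)) : Prop :=
  ∀ (ι : Type u) (F : Filter ι), F.NeBot → ∀ B : ι → SStruct.{u} L, (∀ i, B i ∈ K) →
    (⟨F.Product fun i => (B i : Type u), inferInstance, inferInstance⟩ : SStruct.{u} L) ∈ K

/-- A class of structures is closed under homomorphic images. -/
def ClosedUnderHomImages (K : Set (SStruct.{u} L)) : Prop :=
  ∀ M ∈ K, ∀ (N : SStruct.{u} L) (f : (M : Type u) →[L] (N : Type u)),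
    Function.Surjective f → N ∈ K

/-- A class of structures is closed under direct products. -/
def ClosedUnderProducts (K : Set (SStruct.{u} L)) : Prop :=
  ∀ (ι : Type u) (B : ι → SStruct.{u} L), (∀ i, B i ∈ K) →
    (⟨∀ i, (B i : Type u), inferInstance, inferInstance⟩ : SStruct.{u} L) ∈ K

/-- A class of structures is axiomatized by a set of formulas `Γ` if it consists
exactly of those structures satisfying every formula of `Γ`. -/
def AxiomatizedBy (K : Set (SStruct.{u} L)) (Γ : Set (L.Formula ℕ)) : Prop :=
  ∀ M : SStruct.{u} L, M ∈ K ↔ ∀ φ ∈ Γ, SatAll (M : Type u) φ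

/-- The positive diagram of `A`: all atomic `Σ(A)`-sentences true in `A`. -/
def DiagPlus (A : Type u') [L.Structure A] : Set ((L[[A]]).Sentence) :=
  {φ | BoundedFormula.IsAtomic φ ∧ A ⊨ φ}

/-- The negative diagram of `A`: all negated atomic `Σ(A)`-sentences true in `A`. -/
def DiagMinus (A : Type u') [L.Structure A] : Set ((L[[A]]).Sentence) :=
  {φ | ∃ ψ : (L[[A]]).Sentence, BoundedFormula.IsAtomic ψ ∧ φ = ψ.not ∧ A ⊨ φ}

/-- The diagram of `A`. -/
def Diag (A : Type u') [L.Structure A] : Set ((L[[A]]).Sentence) :=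
  DiagPlus L A ∪ DiagMinus L A

/-!
By the definition of the reduced product, an atomic formula holds in it iff it holds at
`F`-almost every index; hence a negated atomic formula holds in it iff it holds at `F`-frequently
many indices. If a Horn clause holds almost everywhere, then either one of its finitely many
negated disjuncts holds frequently, or almost everywhere all of them fail and the unique atomic
disjunct, which exists because `F` is proper, has to hold.
-/

theorem exists_frequently_or_eventually_of_eventually {ι κ : Type*} {F : Filter ι} {s : Set κ}
    (hs : s.Finite) {p : κ → ι → Prop} {q : ι → Prop}
    (h : ∀ᶠ i in F, (∃ k ∈ s, p k i) ∨ q i) :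
    (∃ k ∈ s, ∃ᶠ i in F, p k i) ∨ ∀ᶠ i in F, q i := by
  refine or_iff_not_imp_left.2 fun hp => ?_
  have hfail : ∀ᶠ i in F, ∀ k ∈ s, ¬p k i :=
    (eventually_all_finite hs).2 fun k hk => not_frequently.1 fun hk' => hp ⟨k, hk, hk'⟩
  filter_upwards [h, hfail] with i hi hfail_i
  exact hi.resolve_left fun ⟨k, hk, hpk⟩ => hfail_i k hk hpk

section Horn

variable {L} {α : Type*}

theorem realize_orList {N : Type*} [L.Structure N] {v : α → N} {ψ : L.Formula α}
    {l : List (L.Formula α)} : (orList ψ l).Realize v ↔ ∃ χ ∈ ψ :: l, χ.Realize v := by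
  induction l generalizing ψ with
  | nil => simp [orList]
  | cons χ l ih => simp [orList, Formula.realize_sup, ih]

theorem IsHornList.eq_of_isAtomic {l : List (L.Formula α)} (hl : IsHornList l)
    {χ θ : L.Formula α} (hχ : χ ∈ l) (hθ : θ ∈ l) (hχa : BoundedFormula.IsAtomic χ)
    (hθa : BoundedFormula.IsAtomic θ) : χ = θ := by
  obtain ⟨i, rfl⟩ := List.get_of_mem hχ
  obtain ⟨j, rfl⟩ := List.get_of_mem hθ
  rw [hl.2 i j hχa hθa]

end Horn

section ReducedProduct

variable {L} {ι : Type*} {F : Filter ι} {M : ι → Type*} [∀ i, L.Structure (M i)]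
  {α : Type*} {n : ℕ}

theorem funMap_reducedProduct (f : L.Functions n) (x : Fin n → ∀ i, M i) :
    (funMap f fun k => (x k : F.Product M)) =
      ((fun i => funMap f fun k => x k i : ∀ i, M i) : F.Product M) :=
  funMap_quotient_mk' (F.productSetoid M) f x

theorem relMap_reducedProduct (r : L.Relations n) (x : Fin n → ∀ i, M i) :
    (RelMap r fun k => (x k : F.Product M)) ↔ ∀ᶠ i in F, RelMap r fun k => x k i :=
  relMap_quotient_mk' (F.productSetoid M) r x

theorem realize_term_reducedProduct (t : L.Term α) (x : α → ∀ i, M i) :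
    (t.realize fun k => (x k : F.Product M)) =
      ((fun i => t.realize fun k => x k i : ∀ i, M i) : F.Product M) := by
  induction t with
  | var => rfl
  | func f ts ih => simp only [Term.realize, ih, funMap_reducedProduct]

theorem realize_boundedFormula_reducedProduct_of_isAtomic {φ : L.BoundedFormula α n}
    (hφ : φ.IsAtomic) (x : α → ∀ i, M i) (y : Fin n → ∀ i, M i) :
    (φ.Realize (fun k => (x k : F.Product M)) fun k => (y k : F.Product M)) ↔
      ∀ᶠ i in F, φ.Realize (fun k => x k i) fun k => y k i := by
  have elim_coe : Sum.elim (fun k => (x k : F.Product M)) (fun k => (y k : F.Product M)) =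
      fun k => ((Sum.elim x y k : ∀ i, M i) : F.Product M) := by
    ext (k | k) <;> rfl
  have elim_apply (i : ι) : Sum.elim (fun k => x k i) (fun k => y k i) =
      fun k => Sum.elim x y k i := by
    ext (k | k) <;> rfl
  cases hφ with
  | equal t₁ t₂ =>
    simp only [BoundedFormula.realize_bdEqual, elim_coe, elim_apply, realize_term_reducedProduct]
    exact Quotient.eq''
  | rel r ts =>
    simp only [BoundedFormula.realize_rel, elim_coe, elim_apply, realize_term_reducedProduct,
      relMap_reducedProduct]

theorem realize_reducedProduct_of_isAtomic {φ : L.Formula α} (hφ : BoundedFormula.IsAtomic φ)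
    (x : α → ∀ i, M i) :
    (φ.Realize fun k => (x k : F.Product M)) ↔ ∀ᶠ i in F, φ.Realize fun k => x k i := by
  simpa only [Formula.boundedFormula_realize_eq_realize] using
    realize_boundedFormula_reducedProduct_of_isAtomic hφ x Fin.elim0

theorem realize_not_reducedProduct_of_isAtomic {φ : L.Formula α}
    (hφ : BoundedFormula.IsAtomic φ) (x : α → ∀ i, M i) :
    (φ.not.Realize fun k => (x k : F.Product M)) ↔ ∃ᶠ i in F, φ.not.Realize fun k => x k i := by
  simp only [Formula.realize_not, realize_reducedProduct_of_isAtomic hφ, not_eventually]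

theorem IsHornList.exists_realize_reducedProduct [F.NeBot] {l : List (L.Formula α)}
    (hl : IsHornList l) {x : α → ∀ i, M i}
    (h : ∀ᶠ i in F, ∃ χ ∈ l, χ.Realize fun k => x k i) :
    ∃ χ ∈ l, χ.Realize fun k => (x k : F.Product M) := by
  have hsplit : ∀ᶠ i in F,
      (∃ χ ∈ {χ ∈ l | ¬BoundedFormula.IsAtomic χ}, χ.Realize fun k => x k i) ∨
        ∃ χ ∈ l, BoundedFormula.IsAtomic χ ∧ χ.Realize fun k => x k i := by
    filter_upwards [h] with i ⟨χ, hχ, hreal⟩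
    by_cases hat : BoundedFormula.IsAtomic χ
    · exact .inr ⟨χ, hχ, hat, hreal⟩
    · exact .inl ⟨χ, ⟨hχ, hat⟩, hreal⟩
  rcases exists_frequently_or_eventually_of_eventually (l.finite_toSet.subset fun _ hχ => hχ.1)
    hsplit with ⟨χ, ⟨hχ, hnat⟩, hfreq⟩ | hatomic
  · obtain ⟨θ, hθ, rfl⟩ := (hl.1 χ hχ).resolve_left hnat
    exact ⟨_, hχ, (realize_not_reducedProduct_of_isAtomic hθ x).2 hfreq⟩
  · obtain ⟨-, χ, hχ, hat, -⟩ := hatomic.exists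
    refine ⟨χ, hχ, (realize_reducedProduct_of_isAtomic hat x).2 ?_⟩
    filter_upwards [hatomic] with i ⟨θ, hθ, hθat, hreal⟩
    rwa [hl.eq_of_isAtomic hχ hθ hat hθat]

theorem realize_basicHorn_reducedProduct_general [F.NeBot] {φ : L.Formula α}
    (hφ : IsBasicHorn φ) {x : α → ∀ i, M i} (h : ∀ᶠ i in F, φ.Realize fun k => x k i) :
    φ.Realize fun k => (x k : F.Product M) := by
  obtain ⟨ψ, l, rfl, hl⟩ := hφ
  exact realize_orList.2 (hl.exists_realize_reducedProduct (h.mono fun _ => realize_orList.1))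

end ReducedProduct

/-- Lemma 2(2): for a basic Horn formula `φ(x₁,…,xₙ)` and `ā₁,…,āₙ` in the direct product,
if `{i | Mᵢ ⊨ φ[πᵢ(ā₁),…,πᵢ(āₙ)]} ∈ F` then the reduced product `∏_F Mᵢ`
satisfies `φ` at the classes `āₖ/F`. -/
theorem realize_basicHorn_reducedProduct {L : FirstOrder.Language.{v, w}}
    {ι : Type u} (F : Filter ι) [F.NeBot] (M : ι → Type w')
    [∀ i, L.Structure (M i)] [∀ i, Nonempty (M i)] {n : ℕ}
    (φ : L.Formula (Fin n)) (hφ : IsBasicHorn φ)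
    (a : Fin n → ∀ i, M i)
    (h : {i : ι | φ.Realize fun k => a k i} ∈ F) :
    φ.Realize fun k => (↑(a k) : F.Product M) :=
  realize_basicHorn_reducedProduct_general hφ h

end ZFHorn
end

section
/- Let Σ be a first-order signature, let 𝒦 be a class of Σ-structures, and let Δ denote the set of all basic Horn formulas φ such that every structure in 𝒦 satisfies φ. For every Σ-structure A, if A satisfies every formula in Δ, then A can be embedded into some reduced product of structures in 𝒦. -/
/-!
Common definitions: products, reduced products, basic Horn formulas,
bundled structures, diagrams, units.
-/

namespace ZFHorn

open FirstOrder Language Structure Filter Set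

universe u v w u' v' w'

variable {L : FirstOrder.Language.{v, w}}

variable (L)

/-!
Let `Δ⁺` be the set of atomic formulas, with the elements of `A` as variables, that are true in `A`
under the tautological assignment. For a finite `T ⊆ Δ⁺` and a literal `ψ` false in `A`, the basic
Horn formula `⋀ T → ψ` fails in `A`, hence at some assignment `v_{T,ψ}` in some member `B_{T,ψ}`
of `K`. Filter the pairs `(T, ψ)` by the growth of `T` alone: an atomic formula true in `A` holds
under `v_{T,ψ}` as soon as it belongs to `T`, while a false one, `ψ`, fails at every index `(T, ψ)`.
So `a ↦ [v_{T,ψ}(a)]` is an embedding of `A` into the reduced product of the `B_{T,ψ}`.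
-/

section

variable {L} {α : Type u'} {β : Type v'}

theorem realize_iff_of_eqOn_freeVarFinset [DecidableEq α] {M : Type*} [L.Structure M] {n : ℕ}
    {φ : L.BoundedFormula α n} {v v' : α → M} {xs : Fin n → M}
    (h : EqOn v v' φ.freeVarFinset) : φ.Realize v xs ↔ φ.Realize v' xs :=
  (BoundedFormula.realize_restrictFreeVar (f := Subtype.val) v fun _ => rfl).symm.trans
    (BoundedFormula.realize_restrictFreeVar v' fun a => h a.2)

theorem exists_satAll_relabel_nat_iff (φ : L.Formula α) :
    ∃ f : α → ℕ, ∀ (M : Type u) [L.Structure M] [Nonempty M],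
      SatAll M (φ.relabel f) ↔ SatAll M φ := by
  classical
  let s : Set α := (BoundedFormula.freeVarFinset φ : Set α)
  have hs : s.Countable := Finset.countable_toSet _
  obtain ⟨f, hf⟩ := countable_iff_exists_injOn.1 hs
  refine ⟨f, fun M _ _ => ⟨fun h v => ?_, fun h w => Formula.realize_relabel.2 (h _)⟩⟩
  obtain ⟨w, hw⟩ : ∃ w : ℕ → M, EqOn (w ∘ f) v s :=
    ⟨Function.extend (s.domRestrict f) (s.domRestrict v) (Classical.arbitrary _),
      fun a ha => hf.injective.extend_apply _ (Classical.arbitrary _) ⟨a, ha⟩⟩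
  exact (realize_iff_of_eqOn_freeVarFinset hw).1 (Formula.realize_relabel.1 (h w))

/-- A literal is an atomic formula or the negation of one; Horn lists are lists of literals. -/
def IsLiteral (χ : L.Formula α) : Prop :=
  BoundedFormula.IsAtomic χ ∨ ∃ θ : L.Formula α, BoundedFormula.IsAtomic θ ∧ χ = θ.not

theorem not_isAtomic_not (θ : L.Formula α) : ¬ BoundedFormula.IsAtomic θ.not :=
  fun h => nomatch h

theorem IsLiteral.relabel {χ : L.Formula α} (h : IsLiteral χ) (f : α → β) :
    IsLiteral (χ.relabel f) := by
  rcases h with h | ⟨θ, h, rfl⟩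
  · exact Or.inl (h.relabel _)
  · exact Or.inr ⟨θ.relabel f, h.relabel _, rfl⟩

theorem IsLiteral.isAtomic_of_relabel {χ : L.Formula α} (h : IsLiteral χ) {f : α → β}
    (hf : BoundedFormula.IsAtomic (χ.relabel f)) : BoundedFormula.IsAtomic χ := by
  rcases h with h | ⟨θ, -, rfl⟩
  · exact h
  · exact absurd hf (not_isAtomic_not (θ.relabel f))

theorem isHornList_iff_pairwise {l : List (L.Formula α)} :
    IsHornList l ↔ (∀ χ ∈ l, IsLiteral χ) ∧ l.Pairwise fun χ χ' =>
      BoundedFormula.IsAtomic χ → ¬ BoundedFormula.IsAtomic χ' := by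
  refine and_congr_right fun _ => Iff.trans ⟨?_, ?_⟩ List.pairwise_iff_get.symm
  · exact fun h i j hij hi hj => hij.ne (h i j hi hj)
  · intro h i j hi hj
    rcases lt_trichotomy i j with hij | rfl | hij
    · exact absurd hj (h i j hij hi)
    · rfl
    · exact absurd hi (h j i hij hj)

theorem IsHornList.map_relabel {l : List (L.Formula α)} (hl : IsHornList l) (f : α → β) :
    IsHornList (l.map (Formula.relabel f)) := by
  rw [isHornList_iff_pairwise] at hl ⊢
  obtain ⟨hlit, hatomic⟩ := hl
  refine ⟨List.forall_mem_map.2 fun χ hχ => (hlit χ hχ).relabel f, List.pairwise_map.2 ?_⟩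
  exact hatomic.imp_of_mem fun hχ hχ' h hf hf' =>
    h ((hlit _ hχ).isAtomic_of_relabel hf) ((hlit _ hχ').isAtomic_of_relabel hf')

theorem relabel_orList (f : α → β) (ψ : L.Formula α) (l : List (L.Formula α)) :
    (orList ψ l).relabel f = orList (ψ.relabel f) (l.map (Formula.relabel f)) := by
  induction l generalizing ψ with
  | nil => rfl
  | cons χ l ih => exact congrArg ((ψ.relabel f).not.imp ·) (ih χ)

theorem IsBasicHorn.relabel {φ : L.Formula α} (h : IsBasicHorn φ) (f : α → β) :
    IsBasicHorn (φ.relabel f) := by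
  obtain ⟨ψ, l, rfl, hl⟩ := h
  exact ⟨_, _, relabel_orList f ψ l, hl.map_relabel f⟩

/-- The implication `φ₁ ∧ ⋯ ∧ φₙ → ψ` written as the disjunction `ψ ∨ ¬φ₁ ∨ ⋯ ∨ ¬φₙ`; it is a
basic Horn formula when the `φᵢ` are atomic and `ψ` is a literal. -/
def hornClause (Φ : List (L.Formula α)) (ψ : L.Formula α) : L.Formula α :=
  orList ψ (Φ.map Formula.not)

theorem realize_hornClause {M : Type*} [L.Structure M] {Φ : List (L.Formula α)}
    {ψ : L.Formula α} {v : α → M} :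
    (hornClause Φ ψ).Realize v ↔ ((∀ φ ∈ Φ, φ.Realize v) → ψ.Realize v) := by
  induction Φ generalizing ψ with
  | nil => simp [hornClause, orList]
  | cons φ Φ ih =>
    have h : hornClause (φ :: Φ) ψ = ψ ⊔ hornClause Φ φ.not := rfl
    rw [h, Formula.realize_sup, ih, Formula.realize_not, List.forall_mem_cons]
    tauto

theorem isBasicHorn_hornClause {Φ : List (L.Formula α)} {ψ : L.Formula α}
    (hΦ : ∀ φ ∈ Φ, BoundedFormula.IsAtomic φ) (hψ : IsLiteral ψ) :
    IsBasicHorn (hornClause Φ ψ) := by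
  refine ⟨ψ, Φ.map Formula.not, rfl, isHornList_iff_pairwise.2 ⟨?_, ?_⟩⟩
  · exact List.forall_mem_cons.2
      ⟨hψ, List.forall_mem_map.2 fun φ hφ => Or.inr ⟨φ, hΦ φ hφ, rfl⟩⟩
  · refine List.pairwise_cons.2
      ⟨List.forall_mem_map.2 fun φ _ _ => not_isAtomic_not φ, List.pairwise_map.2 ?_⟩
    exact List.pairwise_of_forall fun φ _ h => absurd h (not_isAtomic_not φ)

/-- `A` is a model of the Horn theory of `K` in the variables `α`: it satisfies every basic Horn
formula with variables in `α` that holds in every member of `K`. -/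
def ModelsHornTheory (K : Set (SStruct.{u} L)) (A : Type w') [L.Structure A] (α : Type u') :
    Prop :=
  ∀ φ : L.Formula α, IsBasicHorn φ → (∀ M ∈ K, SatAll (M : Type u) φ) → SatAll A φ

variable (L) in
/-- The atomic formulas true in `A` under the assignment `v`. For `v = id` this is the positive
diagram `DiagPlus L A`, with elements of `A` as variables rather than as constants. -/
def trueAtomics {A : Type w'} [L.Structure A] (v : α → A) : Set (L.Formula α) :=
  {φ | BoundedFormula.IsAtomic φ ∧ φ.Realize v}

variable (L) in
/-- The literals false in `A` under the assignment `v`. Negated atomic formulas are included so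
that the set is nonempty even if all atomic formulas are true. -/
def falseLiterals {A : Type w'} [L.Structure A] (v : α → A) : Set (L.Formula α) :=
  {ψ | IsLiteral ψ ∧ ¬ ψ.Realize v}

variable {K : Set (SStruct.{u} L)} {A : Type w'} [L.Structure A]

theorem falseLiterals_nonempty [Nonempty α] (v : α → A) :
    (falseLiterals L v).Nonempty := by
  obtain ⟨a⟩ := ‹Nonempty α›
  let θ : L.Formula α := (Term.var a).equal (Term.var a)
  exact ⟨θ.not, Or.inr ⟨θ, BoundedFormula.IsAtomic.equal _ _, rfl⟩, by simp [θ]⟩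

theorem ModelsHornTheory.of_nat [Nonempty A] (h : ModelsHornTheory K A ℕ) (α : Type u') :
    ModelsHornTheory K A α := by
  intro φ hφ hK
  obtain ⟨f, hf⟩ := exists_satAll_relabel_nat_iff φ
  have hA : SatAll A (φ.relabel f) :=
    h _ (hφ.relabel f) fun M hM v => Formula.realize_relabel.2 (hK M hM _)
  exact (hf A).1 hA

theorem ModelsHornTheory.exists_realize_and_not_realize (h : ModelsHornTheory K A α)
    {v₀ : α → A} (T : Finset (trueAtomics L v₀)) (ψ : falseLiterals L v₀) :
    ∃ M ∈ K, ∃ v : α → (M : Type u),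
      (∀ φ ∈ T, φ.1.Realize v) ∧ ¬ ψ.1.Realize v := by
  obtain ⟨ψ, hψ, hψv₀⟩ := ψ
  let Φ : List (L.Formula α) := T.toList.map Subtype.val
  have hΦ {p : L.Formula α → Prop} : (∀ φ ∈ Φ, p φ) ↔ ∀ φ ∈ T, p φ.1 := by
    simp only [Φ, List.forall_mem_map, Finset.mem_toList]
  have hHorn : IsBasicHorn (hornClause Φ ψ) :=
    isBasicHorn_hornClause (hΦ.2 fun φ _ => φ.2.1) hψ
  by_contra! hK
  have hA : SatAll A (hornClause Φ ψ) :=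
    h _ hHorn fun M hM v => realize_hornClause.2 fun hv => hK M hM v (hΦ.1 hv)
  exact hψv₀ (realize_hornClause.1 (hA v₀) (hΦ.2 fun φ _ => φ.2.2))

theorem ModelsHornTheory.exists_eventually_realize_iff [Nonempty α]
    (h : ModelsHornTheory K A α) (v₀ : α → A) :
    ∃ (ι : Type (max v w u')) (F : Filter ι) (_ : F.NeBot) (B : ι → SStruct.{u} L)
      (v : ∀ i, α → (B i : Type u)), (∀ i, B i ∈ K) ∧
        ∀ φ : L.Formula α, BoundedFormula.IsAtomic φ →
          ((∀ᶠ i in F, φ.Realize (v i)) ↔ φ.Realize v₀) := by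
  have : Nonempty (falseLiterals L v₀) := (falseLiterals_nonempty v₀).to_subtype
  choose B hBK v hv_true hv_false using
    fun i : Finset (trueAtomics L v₀) × falseLiterals L v₀ =>
      h.exists_realize_and_not_realize i.1 i.2
  refine ⟨_, atTop ×ˢ ⊤, inferInstance, B, v, hBK, fun φ hφ => ⟨fun hev => ?_, fun hφA => ?_⟩⟩
  · by_contra hφA
    obtain ⟨T, hT⟩ := hev.curry.exists
    exact hv_false (T, ⟨φ, Or.inl hφ, hφA⟩) (eventually_top.1 hT _)
  · exact ((eventually_ge_atTop {⟨φ, hφ, hφA⟩}).prod_inl ⊤).mono fun i hi =>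
      hv_true i _ (hi (Finset.mem_singleton_self _))

/-- The embedding `a ↦ [i ↦ v i a]` of `A` into the reduced product of the `M i`, for maps
`v i : A → M i` under which each atomic formula is `F`-eventually true exactly if it is true in
`A`. -/
def reducedProductEmbedding {A : Type*} [L.Structure A] {ι : Type*} (F : Filter ι)
    {M : ι → Type*} [∀ i, L.Structure (M i)] (v : ∀ i, A → M i)
    (h : ∀ φ : L.Formula A, BoundedFormula.IsAtomic φ →
      ((∀ᶠ i in F, φ.Realize (v i)) ↔ φ.Realize (id : A → A))) :
    A ↪[L] F.Product M :=
  have h_equal (t s : L.Term A) : (∀ᶠ i in F, t.realize (v i) = s.realize (v i)) ↔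
      t.realize (id : A → A) = s.realize id := by
    simpa only [Formula.realize_equal] using h (t.equal s) (BoundedFormula.IsAtomic.equal _ _)
  have h_rel {n : ℕ} (r : L.Relations n) (x : Fin n → A) :
      (∀ᶠ i in F, RelMap r fun k => v i (x k)) ↔ RelMap r x := by
    simpa only [Formula.realize_rel, Term.realize_var, id_eq] using
      h (r.formula fun k => Term.var (x k)) (BoundedFormula.IsAtomic.rel _ _)
  { toFun a := Quotient.mk _ fun i => v i a
    inj' a b hab := (h_equal (Term.var a) (Term.var b)).1 (Quotient.exact hab)
    map_fun' f x := by
      refine Eq.trans (Quotient.sound ?_) (funMap_quotient_mk' _ f fun k i => v i (x k)).symm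
      exact (h_equal (Term.var (funMap f x)) (Term.func f fun k => Term.var (x k))).2 rfl
    map_rel' r x := (relMap_quotient_mk' _ r fun k i => v i (x k)).trans (h_rel r x) }

end

/-- Lemma 4 (Hodges 9.4.6): if `A` satisfies every basic Horn formula that holds in every
member of `K`, then `A` embeds into a reduced product of structures in `K`. -/
theorem embedding_into_reducedProduct {L : FirstOrder.Language.{u, u}}
    (K : Set (SStruct.{u} L)) (A : Type u) [L.Structure A] [Nonempty A]
    (hA : ∀ φ : L.Formula ℕ, IsBasicHorn φ →
      (∀ M ∈ K, SatAll (M : Type u) φ) → SatAll A φ) :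
    ∃ (ι : Type u) (F : Filter ι) (_ : F.NeBot) (B : ι → SStruct.{u} L),
      (∀ i, B i ∈ K) ∧ Nonempty (A ↪[L] F.Product fun i => (B i : Type u)) := by
  have hA' : ModelsHornTheory K A A := ModelsHornTheory.of_nat hA A
  obtain ⟨ι, F, hF, B, v, hBK, hv⟩ := hA'.exists_eventually_realize_iff id
  exact ⟨ι, F, hF, B, hBK, ⟨reducedProductEmbedding F v hv⟩⟩

end ZFHorn
end

section
/- Let Σ be a first-order signature, let 𝒦 be a class of Σ-structures, and let Δ denote the set of all atomic formulas φ such that every structure in 𝒦 satisfies φ. For every Σ-structure A, if A satisfies every formula in Δ, then A is a homomorphic image of a substructure of a product of structures in 𝒦. -/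
/-!
Common definitions: products, reduced products, basic Horn formulas,
bundled structures, diagrams, units.
-/

namespace ZFHorn

open FirstOrder Language Structure Filter Set

universe u v w u' v' w'

variable {L : FirstOrder.Language.{v, w}}

variable (L)

/-!
A formula has only finitely many free variables, so `A` satisfies the atomic formulas valid in `K`
over any set of variables, in particular over `A` itself. Take the product of one counterexample
`(M, v : A → M)`, with `M ∈ K`, for each formula over `A` that is not valid in `K`, and let
`g : A → ∏ M` be the tuple of these valuations. An atomic formula that holds at `g` holds at every
coordinate, hence is valid in `K`, hence holds in `A` when each variable `a` denotes the element
`a`. So `t(g) ↦ t(id)` is a well-defined homomorphism from the substructure generated by the range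
of `g` onto `A`.
-/

section HomImage

variable {L : FirstOrder.Language.{v, w}} {α : Type u'} {β : Type v'}

section Relabel

variable {M : Type*} [L.Structure M]

theorem realize_congr_of_eqOn_freeVarFinset [DecidableEq α] {n : ℕ} {φ : L.BoundedFormula α n}
    {v v' : α → M} {xs : Fin n → M} (h : EqOn v v' φ.freeVarFinset) :
    φ.Realize v xs ↔ φ.Realize v' xs :=
  (BoundedFormula.realize_restrictFreeVar (f := Subtype.val) v fun _ => rfl).symm.trans <|
    BoundedFormula.realize_restrictFreeVar v' fun a => h a.2

theorem satAll_relabel_iff [Nonempty M] [DecidableEq α] {φ : L.Formula α} {e : α → β}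
    (he : InjOn e φ.freeVarFinset) : SatAll M (φ.relabel e) ↔ SatAll M φ := by
  refine ⟨fun h v => ?_, fun h v => Formula.realize_relabel.2 (h (v ∘ e))⟩
  obtain ⟨v', hv'⟩ := he.injective.surjective_comp_right
    ((φ.freeVarFinset : Set α).domRestrict v)
  have hv'_eqOn : EqOn (v' ∘ e) v φ.freeVarFinset := fun a ha => congrFun hv' ⟨a, ha⟩
  exact (realize_congr_of_eqOn_freeVarFinset hv'_eqOn).1 (Formula.realize_relabel.1 (h v'))

theorem satAll_of_isAtomic_of_infinite [Infinite β] [Nonempty M] {K : Set (SStruct.{u} L)}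
    (hM : ∀ φ : L.Formula β, BoundedFormula.IsAtomic φ →
      (∀ N ∈ K, SatAll (N : Type u) φ) → SatAll M φ)
    {φ : L.Formula α} (hφ : BoundedFormula.IsAtomic φ)
    (hK : ∀ N ∈ K, SatAll (N : Type u) φ) : SatAll M φ := by
  classical
  obtain ⟨e, -, he⟩ := φ.freeVarFinset.finite_toSet.exists_injOn_of_encard_le
    (t := (univ : Set β)) (by simp)
  exact (satAll_relabel_iff he).1 <|
    hM _ (hφ.relabel _) fun N hN => (satAll_relabel_iff he).2 (hK N hN)

end Relabel

section Product

variable {ι : Type*} {M : ι → Type*} [∀ i, L.Structure (M i)]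

/-- The projection of a direct product of structures onto its `i`-th factor, as a homomorphism;
it reduces the evaluation of terms in the product to their evaluation in the factors. -/
def piEvalHom (i : ι) : (∀ i, M i) →[L] M i where
  toFun y := y i
  map_rel' _ _ h := h i

theorem realize_term_pi_apply (t : L.Term α) (v : α → ∀ i, M i) (i : ι) :
    t.realize v i = t.realize fun a => v a i :=
  (HomClass.realize_term (piEvalHom (L := L) i)).symm

theorem realize_boundedFormula_pi_iff_of_isAtomic {n : ℕ} {φ : L.BoundedFormula α n}
    (hφ : φ.IsAtomic) {v : α → ∀ i, M i} {xs : Fin n → ∀ i, M i} :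
    φ.Realize v xs ↔ ∀ i, φ.Realize (fun a => v a i) fun k => xs k i := by
  have term_apply (t : L.Term (α ⊕ Fin n)) (i : ι) : t.realize (Sum.elim v xs) i =
      t.realize (Sum.elim (fun a => v a i) fun k => xs k i) := by
    rw [realize_term_pi_apply]
    congr 1
    ext (a | k) <;> rfl
  cases hφ with
  | equal s t => simp only [BoundedFormula.realize_bdEqual, funext_iff, term_apply]
  | rel R ts =>
    simp only [BoundedFormula.realize_rel, ← term_apply]
    rfl

theorem realize_pi_iff_of_isAtomic {φ : L.Formula α} (hφ : BoundedFormula.IsAtomic φ)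
    {v : α → ∀ i, M i} : φ.Realize v ↔ ∀ i, φ.Realize fun a => v a i := by
  simp only [Formula.Realize, realize_boundedFormula_pi_iff_of_isAtomic hφ, Unique.eq_default]

end Product

section Generated

variable {M : Type*} [L.Structure M] {N : Type*} [L.Structure N]

theorem mem_closure_range_iff_exists_term {g : α → M} {y : M} :
    y ∈ Substructure.closure L (range g) ↔ ∃ t : L.Term α, t.realize g = y := by
  constructor
  · rw [Substructure.mem_closure_iff_exists_term]
    rintro ⟨t, rfl⟩
    exact ⟨t.relabel (rangeSplitting g), by rw [Term.realize_relabel, comp_rangeSplitting]⟩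
  · rintro ⟨t, rfl⟩
    exact t.realize_mem _ fun a => Substructure.subset_closure (mem_range_self a)

theorem exists_hom_closure_range {g : α → M} {h : α → N}
    (hgh : ∀ φ : L.Formula α, BoundedFormula.IsAtomic φ → φ.Realize g → φ.Realize h) :
    ∃ f : Substructure.closure L (range g) →[L] N,
      ∀ a, f ⟨g a, Substructure.subset_closure (mem_range_self a)⟩ = h a := by
  have realize_eq (s t : L.Term α) (hst : s.realize g = t.realize g) :
      s.realize h = t.realize h :=
    Formula.realize_equal.1 <| hgh _ (.equal _ _) (Formula.realize_equal.2 hst)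
  choose t ht using fun y : Substructure.closure L (range g) =>
    mem_closure_range_iff_exists_term.1 y.2
  refine ⟨⟨fun y => (t y).realize h, fun F y => ?_, fun R y hR => ?_⟩, fun a => ?_⟩
  · refine realize_eq _ (.func F fun k => t (y k)) ?_
    simp only [ht, Term.realize_func]
    rfl
  · refine Formula.realize_rel.1 <|
      hgh (R.formula fun k => t (y k)) (.rel _ _) (Formula.realize_rel.2 ?_)
    simp only [ht]
    exact hR
  · exact realize_eq _ (.var a) (ht _)

end Generated

theorem exists_separating_valuations (K : Set (SStruct.{u} L)) (α : Type u') :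
    ∃ (ι : Type (max u' v w)) (B : ι → SStruct.{u} L) (v : ∀ i, α → (B i : Type u)),
      (∀ i, B i ∈ K) ∧
        ∀ φ : L.Formula α, (∀ i, φ.Realize (v i)) → ∀ M ∈ K, SatAll (M : Type u) φ := by
  choose B hBK v hv using fun i : {φ : L.Formula α //
    ∃ M ∈ K, ∃ v : α → (M : Type u), ¬ φ.Realize v} => i.2
  refine ⟨_, B, v, hBK, fun φ hφ M hM v' => ?_⟩
  by_contra hv'
  exact hv ⟨φ, M, hM, v', hv'⟩ (hφ _)

theorem homImage_substructure_product_general [Infinite β] (K : Set (SStruct.{u} L))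
    (A : Type u') [L.Structure A] [Nonempty A]
    (hA : ∀ φ : L.Formula β, BoundedFormula.IsAtomic φ →
      (∀ M ∈ K, SatAll (M : Type u) φ) → SatAll A φ) :
    ∃ (ι : Type (max u' v w)) (B : ι → SStruct.{u} L), (∀ i, B i ∈ K) ∧
      ∃ (S : L.Substructure (∀ i, (B i : Type u))) (f : S →[L] A),
        Function.Surjective f := by
  obtain ⟨ι, B, v, hBK, hv⟩ := exists_separating_valuations K A
  let g : A → ∀ i, (B i : Type u) := fun a i => v i a
  have realize_id (φ : L.Formula A) (hφ : BoundedFormula.IsAtomic φ) (hg : φ.Realize g) :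
      φ.Realize (id : A → A) :=
    satAll_of_isAtomic_of_infinite hA hφ (hv φ ((realize_pi_iff_of_isAtomic hφ).1 hg)) id
  obtain ⟨f, hf⟩ := exists_hom_closure_range realize_id
  exact ⟨ι, B, hBK, _, f, fun a => ⟨_, hf a⟩⟩

end HomImage

/-- Lemma 6: if `A` satisfies every atomic formula (identity) that holds in every member
of `K`, then `A` is a homomorphic image of a substructure of a product of structures
in `K`. -/
theorem homImage_substructure_product {L : FirstOrder.Language.{u, u}}
    (K : Set (SStruct.{u} L)) (A : Type u) [L.Structure A] [Nonempty A]
    (hA : ∀ φ : L.Formula ℕ, BoundedFormula.IsAtomic φ →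
      (∀ M ∈ K, SatAll (M : Type u) φ) → SatAll A φ) :
    ∃ (ι : Type u) (B : ι → SStruct.{u} L), (∀ i, B i ∈ K) ∧
      ∃ (S : L.Substructure (∀ i, (B i : Type u))) (f : S →[L] A),
        Function.Surjective f :=
  homImage_substructure_product_general K A hA

end ZFHorn
end
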